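/- arXiv:2002.01178 — 2 statements merged into one kernel-verified Lean document; each statement's English description precedes it below -/
import Mathlib

section
/- Let s_1 and s_2 be binary strings with |s̃_1| < |s̃_2|. Then the condensation s̃_2 is a mean of s_1 and s_2; that is, dtw(s_1, s̃_2)² + dtw(s_2, s̃_2)² ≤ dtw(s_1, z)² + dtw(s_2, z)² for every binary string z, and moreover dtw(s_2, s̃_2) = 0, so F(s̃_2) = dtw(s_1, s̃_2)². -/
/-- One step of a warping path: move down, right, or diagonally. -/
def wpStep (a b : ℕ × ℕ) : Prop :=
  (b.1 = a.1 + 1 ∧ b.2 = a.2) ∨ (b.1 = a.1 ∧ b.2 = a.2 + 1) ∨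
    (b.1 = a.1 + 1 ∧ b.2 = a.2 + 1)

/-- A warping path of order `m × n` (0-based indices). -/
def IsWarpingPath (m n : ℕ) (p : List (ℕ × ℕ)) : Prop :=
  p.head? = some (0, 0) ∧ p.getLast? = some (m - 1, n - 1) ∧
    List.Chain' wpStep p ∧ ∀ q ∈ p, q.1 < m ∧ q.2 < n

/-- The cost of aligning binary strings `x` and `y` along path `p`:
the number of aligned mismatching pairs (for binary symbols,
`(x[i] - y[j])^2` is `0` if the symbols agree and `1` otherwise). -/
def pathCost (x y : List Bool) (p : List (ℕ × ℕ)) : ℕ :=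
  (p.map fun q => if x.getD q.1 false = y.getD q.2 false then 0 else 1).sum

/-- The squared dynamic time warping distance `dtw(x,y)²` of two binary strings. -/
noncomputable def dtwSq (x y : List Bool) : ℕ :=
  sInf {c | ∃ p, IsWarpingPath x.length y.length p ∧ pathCost x y p = c}

/-- The dynamic time warping distance `dtw(x,y)`. -/
noncomputable def dtw (x y : List Bool) : ℝ :=
  Real.sqrt (dtwSq x y)

/-- The condensation of a binary string: collapse every maximal run of equal
consecutive symbols to a single symbol. -/
def condense : List Bool → List Bool
  | [] => []
  | [a] => [a]
  | a :: b :: rest => if a = b then condense (b :: rest) else a :: condense (b :: rest)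

/-- Auxiliary function collecting the block sizes of a binary string. -/
def blockSizesAux : Bool → ℕ → List Bool → List ℕ
  | _, cnt, [] => [cnt]
  | cur, cnt, a :: rest =>
      if a = cur then blockSizesAux cur (cnt + 1) rest
      else cnt :: blockSizesAux a 1 rest

/-- The list of block sizes of a binary string (sizes of the maximal runs
of equal consecutive symbols, from left to right). -/
def blockSizes : List Bool → List ℕ
  | [] => []
  | a :: rest => blockSizesAux a 1 rest

/-- The objective `F(z) = Σᵢ dtw(sᵢ, z)²`. -/
noncomputable def Fobj (ss : List (List Bool)) (z : List Bool) : ℕ :=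
  (ss.map fun s => dtwSq s z).sum

/-- `z` is a mean of the strings `ss`: a nonempty binary string minimizing
`F` among all nonempty binary strings. -/
def IsMean (ss : List (List Bool)) (z : List Bool) : Prop :=
  z ≠ [] ∧ ∀ w : List Bool, w ≠ [] → Fobj ss z ≤ Fobj ss w

/-- The optimal value of a Min 1-Separated Sum instance with integers `b`
(1-based indexing) and selection size `r`: minimize the sum of `r` selected
integers, no two of which are consecutive. -/
noncomputable def mssValue (b : List ℕ) (r : ℕ) : ℕ :=
  sInf {s | ∃ I : List ℕ, I.length = r ∧ (∀ i ∈ I, 1 ≤ i ∧ i ≤ b.length) ∧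
    List.Chain' (fun a c => a + 2 ≤ c) I ∧
    (I.map fun i => b.getD (i - 1) 0).sum = s}

/-!
Let `h` and `l` be `0` or `1` according to whether the first, respectively last, symbols of `x` and
`y` agree or differ. Peeling pairs off an alignment gives `||x̃| - |ỹ|| + h + l ≤ 2 dtw(x, y)²`, and
if `|x̃| < |ỹ|`, a greedy alignment of `x` with `ỹ` gives `2 dtw(x, ỹ)² ≤ |ỹ| - |x̃| + h + l`. The
first bound for `(s₁, z)` and `(s₂, z)`, the second for `(s₁, s₂)`, and the triangle inequality for
the end symbols yield `dtw(s₁, s̃₂)² ≤ dtw(s₁, z)² + dtw(s₂, z)²`, while `dtw(s₂, s̃₂) = 0`.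
-/

section Mismatch

variable {α : Type*} [DecidableEq α]

/-- The discrete metric on `α`: the cost of aligning the symbols `a` and `b`. It is also applied
to the optional symbols `x.head?` and `x.getLast?`. -/
def mismatch (a b : α) : ℕ := if a = b then 0 else 1

@[simp]
lemma mismatch_self (a : α) : mismatch a a = 0 := if_pos rfl

lemma mismatch_of_ne {a b : α} (h : a ≠ b) : mismatch a b = 1 := if_neg h

lemma mismatch_comm (a b : α) : mismatch a b = mismatch b a := by
  simp only [mismatch, eq_comm]

lemma mismatch_triangle (a b c : α) : mismatch a c ≤ mismatch a b + mismatch b c := by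
  grind [mismatch]

@[simp]
lemma mismatch_some (a b : α) : mismatch (some a) (some b) = mismatch a b := by
  simp only [mismatch, Option.some.injEq]

end Mismatch

lemma mismatch_add_mismatch_of_ne (a : Bool) {b b' : Bool} (h : b ≠ b') :
    mismatch a b + mismatch a b' = 1 := by
  revert a b b'; decide

section Condense

lemma condense_eq_destutter (x : List Bool) : condense x = x.destutter (· ≠ ·) := by
  induction x using condense.induct with
  | case1 | case2 => rfl
  | case3 b x ih => simpa [condense, List.destutter_cons_cons, List.destutter_cons'] using ih
  | case4 a b x h ih => simpa [condense, h, List.destutter_cons_cons, List.destutter_cons'] using ih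

lemma isChain_condense (x : List Bool) : (condense x).IsChain (· ≠ ·) := by
  rw [condense_eq_destutter]
  exact x.isChain_destutter _

lemma condense_ne_nil {x : List Bool} (hx : x ≠ []) : condense x ≠ [] := by
  rwa [condense_eq_destutter, Ne, List.destutter_eq_nil]

lemma length_condense_cons_cons (a a' : Bool) (x : List Bool) :
    (condense (a :: a' :: x)).length = mismatch a a' + (condense (a' :: x)).length := by
  rw [condense, mismatch]
  split_ifs <;> simp [add_comm]

lemma length_condense_cons_pos (a : Bool) (x : List Bool) : 0 < (condense (a :: x)).length :=
  List.length_pos_iff.2 (condense_ne_nil (List.cons_ne_nil a x))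

lemma head?_condense (x : List Bool) : (condense x).head? = x.head? := by
  induction x using condense.induct with
  | case1 | case2 => rfl
  | case3 b x ih => simpa [condense] using ih
  | case4 a b x h _ => simp [condense, h]

lemma getLast?_condense (x : List Bool) : (condense x).getLast? = x.getLast? := by
  induction x using condense.induct with
  | case1 | case2 => rfl
  | case3 b x ih => simpa [condense] using ih
  | case4 a b x h ih =>
    rw [condense, if_neg h, List.getLast?_cons, ih]
    simp [List.getLast?_cons]

end Condense

/-- `AlignsWithCost x y c`: some warping path between `x` and `y` has exactly `c` mismatches. This
recursive form of warping paths, peeling off the first aligned pair, is the one used for inductive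
arguments; `exists_isWarpingPath_iff_alignsWithCost` relates it to lists of index pairs. -/
inductive AlignsWithCost {α : Type*} [DecidableEq α] : List α → List α → ℕ → Prop
  | singleton (a b : α) : AlignsWithCost [a] [b] (mismatch a b)
  | left (a b : α) {a' : α} {x y : List α} {c : ℕ} :
      AlignsWithCost (a' :: x) (b :: y) c →
      AlignsWithCost (a :: a' :: x) (b :: y) (mismatch a b + c)
  | right (a b : α) {b' : α} {x y : List α} {c : ℕ} :
      AlignsWithCost (a :: x) (b' :: y) c →
      AlignsWithCost (a :: x) (b :: b' :: y) (mismatch a b + c)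
  | both (a b : α) {a' b' : α} {x y : List α} {c : ℕ} :
      AlignsWithCost (a' :: x) (b' :: y) c →
      AlignsWithCost (a :: a' :: x) (b :: b' :: y) (mismatch a b + c)

namespace AlignsWithCost

section General

variable {α : Type*} [DecidableEq α]

lemma symm {x y : List α} {c : ℕ} (h : AlignsWithCost x y c) : AlignsWithCost y x c := by
  induction h with
  | singleton a b => exact mismatch_comm a b ▸ singleton b a
  | left a b _ ih => exact mismatch_comm a b ▸ right b a ih
  | right a b _ ih => exact mismatch_comm a b ▸ left b a ih
  | both a b _ ih => exact mismatch_comm a b ▸ both b a ih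

lemma exists_of_ne_nil {x y : List α} (hx : x ≠ []) (hy : y ≠ []) :
    ∃ c, AlignsWithCost x y c := by
  obtain ⟨a, x, rfl⟩ := List.exists_cons_of_ne_nil hx
  obtain ⟨b, y, rfl⟩ := List.exists_cons_of_ne_nil hy
  clear hx hy
  induction x generalizing a with
  | nil =>
    induction y generalizing b with
    | nil => exact ⟨_, singleton a b⟩
    | cons b' y ih => exact (ih b').imp' _ fun _ h => right a b h
  | cons a' x ih => exact (ih a').imp' _ fun _ h => left a b h

end General

section Bounds

lemma length_condense_add_mismatch_le {x y : List Bool} {c : ℕ} (h : AlignsWithCost x y c) :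
    (condense x).length + mismatch x.head? y.head? + mismatch x.getLast? y.getLast? ≤
      (condense y).length + 2 * c := by
  induction h with
  | singleton a b =>
    simp only [condense, List.length_singleton, List.head?_cons, List.getLast?_singleton,
      mismatch_some]
    omega
  | @left a b a' x y c _ ih =>
    have htri : mismatch a a' ≤ mismatch a b + mismatch a' b :=
      mismatch_comm b a' ▸ mismatch_triangle a b a'
    simp only [List.head?_cons, mismatch_some, List.getLast?_cons_cons,
      length_condense_cons_cons] at ih ⊢
    omega
  | right a b _ ih =>
    simp only [List.head?_cons, mismatch_some, List.getLast?_cons_cons,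
      length_condense_cons_cons] at ih ⊢
    omega
  | @both a b a' b' x y c _ ih =>
    have htri : mismatch a a' ≤ mismatch a b + mismatch b a' := mismatch_triangle a b a'
    have htri' : mismatch b a' ≤ mismatch b b' + mismatch a' b' :=
      mismatch_comm b' a' ▸ mismatch_triangle b b' a'
    simp only [List.head?_cons, mismatch_some, List.getLast?_cons_cons,
      length_condense_cons_cons] at ih ⊢
    omega

lemma exists_cost_le_singleton_left (a b : Bool) {y : List Bool} (hy : (b :: y).IsChain (· ≠ ·)) :
    ∃ c, AlignsWithCost [a] (b :: y) c ∧
      2 * c + 1 ≤ (b :: y).length + mismatch a b + mismatch (some a) (b :: y).getLast? := by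
  induction y generalizing b with
  | nil =>
    refine ⟨_, singleton a b, ?_⟩
    rw [List.length_singleton, List.getLast?_singleton, mismatch_some]
    omega
  | cons b' y ih =>
    rw [List.isChain_cons_cons] at hy
    obtain ⟨c, hc, hle⟩ := ih b' hy.2
    have hsum := mismatch_add_mismatch_of_ne a hy.1
    refine ⟨_, right a b hc, ?_⟩
    rw [List.getLast?_cons_cons, List.length_cons]
    omega

-- Greedy alignment: `y` advances exactly when `x` changes symbol, and then matches it for free
-- since the alphabet has two letters. The only cost comes from the end of `y` left over.
lemma exists_cost_le_of_head_eq (a : Bool) (x : List Bool) {y : List Bool}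
    (hy : (a :: y).IsChain (· ≠ ·)) (hlen : (condense (a :: x)).length ≤ (a :: y).length) :
    ∃ c, AlignsWithCost (a :: x) (a :: y) c ∧
      2 * c + (condense (a :: x)).length ≤
        (a :: y).length + mismatch (a :: x).getLast? (a :: y).getLast? := by
  induction x generalizing a y with
  | nil => simpa [condense] using exists_cost_le_singleton_left a a hy
  | cons a' x ih =>
    rw [length_condense_cons_cons] at hlen ⊢
    rw [List.getLast?_cons_cons]
    by_cases haa' : a = a'
    · subst haa'
      rw [mismatch_self, zero_add] at hlen ⊢
      obtain ⟨c, hc, hle⟩ := ih a hy hlen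
      exact ⟨_, left a a hc, by simpa using hle⟩
    · rw [mismatch_of_ne haa'] at hlen ⊢
      cases y with
      | nil =>
        have hpos := length_condense_cons_pos a' x
        rw [List.length_singleton] at hlen
        omega
      | cons b y =>
        rw [List.isChain_cons_cons] at hy
        obtain rfl : b = a' := by
          rw [Bool.eq_not_of_ne hy.1.symm, Bool.eq_not_of_ne (Ne.symm haa')]
        rw [List.length_cons] at hlen
        obtain ⟨c, hc, hle⟩ := ih b hy.2 (by omega)
        refine ⟨_, both a a hc, ?_⟩
        rw [mismatch_self, List.getLast?_cons_cons, List.length_cons]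
        omega

lemma exists_cost_le_of_length_condense_lt {x y : List Bool} (hx : x ≠ []) (hy : y.IsChain (· ≠ ·))
    (hlen : (condense x).length < y.length) :
    ∃ c, AlignsWithCost x y c ∧
      2 * c + (condense x).length ≤
        y.length + mismatch x.head? y.head? + mismatch x.getLast? y.getLast? := by
  obtain ⟨a, x, rfl⟩ := List.exists_cons_of_ne_nil hx
  obtain ⟨b, y, rfl⟩ := List.exists_cons_of_length_pos (Nat.zero_lt_of_lt hlen)
  by_cases hab : a = b
  · subst hab
    simpa using exists_cost_le_of_head_eq a x hy hlen.le
  · cases y with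
    | nil =>
      have hpos := length_condense_cons_pos a x
      rw [List.length_singleton] at hlen
      omega
    | cons b' y =>
      rw [List.isChain_cons_cons] at hy
      obtain rfl : b' = a := by
        rw [Bool.eq_not_of_ne hy.1.symm, Bool.eq_not_of_ne hab]
      obtain ⟨c, hc, hle⟩ := exists_cost_le_of_head_eq b' x hy.2 (Nat.le_of_lt_succ hlen)
      refine ⟨_, right b' b hc, ?_⟩
      rw [List.head?_cons, List.head?_cons, mismatch_some, mismatch_of_ne hab,
        List.getLast?_cons_cons, List.length_cons]
      omega

end Bounds

end AlignsWithCost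

section WarpingPath

/-- `q :: p` satisfies the conditions on a warping path of order `m × n` other than starting at
`(0, 0)`. Such a path aligns the suffixes `x.drop q.1` and `y.drop q.2`, so paths can be built and
analysed from their head without shifting indices. -/
def IsWarpingTail (m n : ℕ) (q : ℕ × ℕ) (p : List (ℕ × ℕ)) : Prop :=
  (q :: p).getLast? = some (m - 1, n - 1) ∧ (q :: p).IsChain wpStep ∧
    ∀ r ∈ q :: p, r.1 < m ∧ r.2 < n

lemma isWarpingPath_iff_exists_isWarpingTail {m n : ℕ} {p : List (ℕ × ℕ)} :
    IsWarpingPath m n p ↔ ∃ p', p = (0, 0) :: p' ∧ IsWarpingTail m n (0, 0) p' := by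
  constructor
  · rintro ⟨hhead, htail⟩
    obtain ⟨p', rfl⟩ := List.head?_eq_some_iff.1 hhead
    exact ⟨p', rfl, htail⟩
  · rintro ⟨p', rfl, htail⟩
    exact ⟨rfl, htail⟩

lemma IsWarpingTail.lt {m n : ℕ} {q : ℕ × ℕ} {p : List (ℕ × ℕ)} (h : IsWarpingTail m n q p) :
    q.1 < m ∧ q.2 < n :=
  h.2.2 q List.mem_cons_self

lemma isWarpingTail_nil_iff {m n : ℕ} {q : ℕ × ℕ} :
    IsWarpingTail m n q [] ↔ q.1 + 1 = m ∧ q.2 + 1 = n := by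
  simp only [IsWarpingTail, List.getLast?_singleton, List.IsChain.singleton, List.mem_singleton,
    true_and, Option.some.injEq, Prod.ext_iff]
  constructor
  · rintro ⟨⟨hm, hn⟩, hlt⟩
    have hq := hlt q ⟨rfl, rfl⟩
    omega
  · rintro ⟨rfl, rfl⟩
    simp

lemma isWarpingTail_cons_iff {m n : ℕ} {q r : ℕ × ℕ} {p : List (ℕ × ℕ)} :
    IsWarpingTail m n q (r :: p) ↔ wpStep q r ∧ IsWarpingTail m n r p := by
  simp only [IsWarpingTail, List.getLast?_cons_cons, List.isChain_cons_cons,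
    List.forall_mem_cons]
  constructor
  · rintro ⟨hlast, ⟨hstep, hchain⟩, -, hbounds⟩
    exact ⟨hstep, hlast, hchain, hbounds⟩
  · rintro ⟨hstep, hlast, hchain, hr, hbounds⟩
    have hq : q.1 < m ∧ q.2 < n := by
      unfold wpStep at hstep
      omega
    exact ⟨hlast, ⟨hstep, hchain⟩, hq, hr, hbounds⟩

lemma pathCost_cons (x y : List Bool) (q : ℕ × ℕ) (p : List (ℕ × ℕ)) :
    pathCost x y (q :: p) =
      mismatch (x.getD q.1 false) (y.getD q.2 false) + pathCost x y p :=
  List.sum_cons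

lemma pathCost_singleton (x y : List Bool) (q : ℕ × ℕ) :
    pathCost x y [q] = mismatch (x.getD q.1 false) (y.getD q.2 false) :=
  List.sum_singleton

lemma drop_eq_cons_iff_getD {α : Type*} {x l : List α} {i : ℕ} {a : α} (d : α) :
    x.drop i = a :: l ↔ i < x.length ∧ x.getD i d = a ∧ x.drop (i + 1) = l := by
  by_cases hi : i < x.length
  · rw [List.drop_eq_getElem_cons hi, List.getD_eq_getElem x d hi, List.cons.injEq]
    exact (and_iff_right hi).symm
  · simp [hi, List.drop_eq_nil_of_le (not_lt.1 hi)]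

namespace AlignsWithCost

lemma of_wpStep {x y : List Bool} {q r : ℕ × ℕ} {c : ℕ} (hstep : wpStep q r)
    (hrx : r.1 < x.length) (hry : r.2 < y.length)
    (h : AlignsWithCost (x.drop r.1) (y.drop r.2) c) :
    AlignsWithCost (x.drop q.1) (y.drop q.2)
      (mismatch (x.getD q.1 false) (y.getD q.2 false) + c) := by
  have drop_eq (z : List Bool) {k : ℕ} (hk : k < z.length) :
      z.drop k = z.getD k false :: z.drop (k + 1) :=
    (drop_eq_cons_iff_getD false).2 ⟨hk, rfl, rfl⟩
  rw [drop_eq x hrx, drop_eq y hry] at h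
  rcases hstep with ⟨hx, hy⟩ | ⟨hx, hy⟩ | ⟨hx, hy⟩ <;> rw [hx] at hrx h <;> rw [hy] at hry h
  · rw [drop_eq x (Nat.lt_of_succ_lt hrx), drop_eq x hrx, drop_eq y hry]
    exact left _ _ h
  · rw [drop_eq x hrx, drop_eq y (Nat.lt_of_succ_lt hry), drop_eq y hry]
    exact right _ _ h
  · rw [drop_eq x (Nat.lt_of_succ_lt hrx), drop_eq x hrx, drop_eq y (Nat.lt_of_succ_lt hry),
      drop_eq y hry]
    exact both _ _ h

lemma of_isWarpingTail {x y : List Bool} {q : ℕ × ℕ} {p : List (ℕ × ℕ)}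
    (hp : IsWarpingTail x.length y.length q p) :
    AlignsWithCost (x.drop q.1) (y.drop q.2) (pathCost x y (q :: p)) := by
  induction p generalizing q with
  | nil =>
    obtain ⟨hx, hy⟩ := isWarpingTail_nil_iff.1 hp
    have hdropx : x.drop q.1 = [x.getD q.1 false] :=
      (drop_eq_cons_iff_getD false).2 ⟨hp.lt.1, rfl, List.drop_eq_nil_of_le hx.ge⟩
    have hdropy : y.drop q.2 = [y.getD q.2 false] :=
      (drop_eq_cons_iff_getD false).2 ⟨hp.lt.2, rfl, List.drop_eq_nil_of_le hy.ge⟩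
    rw [hdropx, hdropy, pathCost_singleton]
    exact singleton _ _
  | cons r p ih =>
    obtain ⟨hstep, hr⟩ := isWarpingTail_cons_iff.1 hp
    rw [pathCost_cons]
    exact of_wpStep hstep hr.lt.1 hr.lt.2 (ih hr)

lemma exists_isWarpingTail {x y x' y' : List Bool} {c i j : ℕ} (h : AlignsWithCost x' y' c)
    (hx : x.drop i = x') (hy : y.drop j = y') :
    ∃ p, IsWarpingTail x.length y.length (i, j) p ∧ pathCost x y ((i, j) :: p) = c := by
  induction h generalizing i j with
  | singleton a b =>
    obtain ⟨hi, rfl, hxnil⟩ := (drop_eq_cons_iff_getD false).1 hx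
    obtain ⟨hj, rfl, hynil⟩ := (drop_eq_cons_iff_getD false).1 hy
    refine ⟨[], isWarpingTail_nil_iff.2 ⟨?_, ?_⟩, pathCost_singleton x y _⟩
    · exact le_antisymm hi (List.drop_eq_nil_iff.1 hxnil)
    · exact le_antisymm hj (List.drop_eq_nil_iff.1 hynil)
  | left a b _ ih =>
    obtain ⟨-, rfl, hx'⟩ := (drop_eq_cons_iff_getD false).1 hx
    obtain ⟨-, rfl, -⟩ := (drop_eq_cons_iff_getD false).1 hy
    obtain ⟨p, hp, rfl⟩ := ih hx' hy
    exact ⟨(i + 1, j) :: p, isWarpingTail_cons_iff.2 ⟨.inl ⟨rfl, rfl⟩, hp⟩, pathCost_cons x y _ _⟩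
  | right a b _ ih =>
    obtain ⟨-, rfl, -⟩ := (drop_eq_cons_iff_getD false).1 hx
    obtain ⟨-, rfl, hy'⟩ := (drop_eq_cons_iff_getD false).1 hy
    obtain ⟨p, hp, rfl⟩ := ih hx hy'
    exact ⟨(i, j + 1) :: p, isWarpingTail_cons_iff.2 ⟨.inr (.inl ⟨rfl, rfl⟩), hp⟩,
      pathCost_cons x y _ _⟩
  | both a b _ ih =>
    obtain ⟨-, rfl, hx'⟩ := (drop_eq_cons_iff_getD false).1 hx
    obtain ⟨-, rfl, hy'⟩ := (drop_eq_cons_iff_getD false).1 hy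
    obtain ⟨p, hp, rfl⟩ := ih hx' hy'
    exact ⟨(i + 1, j + 1) :: p, isWarpingTail_cons_iff.2 ⟨.inr (.inr ⟨rfl, rfl⟩), hp⟩,
      pathCost_cons x y _ _⟩

end AlignsWithCost

lemma exists_isWarpingPath_iff_alignsWithCost {x y : List Bool} {c : ℕ} :
    (∃ p, IsWarpingPath x.length y.length p ∧ pathCost x y p = c) ↔ AlignsWithCost x y c := by
  constructor
  · rintro ⟨p, hp, rfl⟩
    obtain ⟨p, rfl, htail⟩ := isWarpingPath_iff_exists_isWarpingTail.1 hp
    exact AlignsWithCost.of_isWarpingTail htail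
  · intro h
    obtain ⟨p, hp, hcost⟩ := h.exists_isWarpingTail (i := 0) (j := 0) rfl rfl
    exact ⟨_, isWarpingPath_iff_exists_isWarpingTail.2 ⟨p, rfl, hp⟩, hcost⟩

end WarpingPath

section DtwSq

lemma dtwSq_eq_sInf (x y : List Bool) : dtwSq x y = sInf {c | AlignsWithCost x y c} := by
  simp only [dtwSq, exists_isWarpingPath_iff_alignsWithCost]

lemma dtwSq_comm (x y : List Bool) : dtwSq x y = dtwSq y x := by
  have hiff (c : ℕ) : AlignsWithCost x y c ↔ AlignsWithCost y x c := ⟨.symm, .symm⟩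
  simp only [dtwSq_eq_sInf, hiff]

lemma AlignsWithCost.dtwSq_le {x y : List Bool} {c : ℕ} (h : AlignsWithCost x y c) :
    dtwSq x y ≤ c :=
  dtwSq_eq_sInf x y ▸ Nat.sInf_le h

lemma alignsWithCost_dtwSq {x y : List Bool} (hx : x ≠ []) (hy : y ≠ []) :
    AlignsWithCost x y (dtwSq x y) :=
  dtwSq_eq_sInf x y ▸ Nat.sInf_mem (AlignsWithCost.exists_of_ne_nil hx hy)

lemma length_condense_add_mismatch_le_add_dtwSq {x y : List Bool} (hx : x ≠ []) (hy : y ≠ []) :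
    (condense x).length + mismatch x.head? y.head? + mismatch x.getLast? y.getLast? ≤
      (condense y).length + 2 * dtwSq x y :=
  (alignsWithCost_dtwSq hx hy).length_condense_add_mismatch_le

lemma two_mul_dtwSq_condense_add_length_le {x y : List Bool} (hx : x ≠ [])
    (hlen : (condense x).length < (condense y).length) :
    2 * dtwSq x (condense y) + (condense x).length ≤
      (condense y).length + mismatch x.head? y.head? + mismatch x.getLast? y.getLast? := by
  obtain ⟨c, hc, hle⟩ :=
    AlignsWithCost.exists_cost_le_of_length_condense_lt hx (isChain_condense y) hlen
  rw [head?_condense, getLast?_condense] at hle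
  have hdtw := hc.dtwSq_le
  omega

lemma dtwSq_condense_self {x : List Bool} (hx : x ≠ []) : dtwSq x (condense x) = 0 := by
  obtain ⟨a, x, rfl⟩ := List.exists_cons_of_ne_nil hx
  obtain ⟨y, hy⟩ := List.head?_eq_some_iff.1 (head?_condense (a :: x))
  obtain ⟨c, hc, hle⟩ := AlignsWithCost.exists_cost_le_of_head_eq a x
    (hy ▸ isChain_condense (a :: x)) (by rw [hy])
  rw [← hy] at hc hle
  rw [getLast?_condense, mismatch_self] at hle
  have hdtw := hc.dtwSq_le
  omega

lemma dtwSq_condense_le_add {x y z : List Bool} (hx : x ≠ []) (hz : z ≠ [])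
    (hlen : (condense x).length < (condense y).length) :
    dtwSq x (condense y) ≤ dtwSq x z + dtwSq y z := by
  have hy : y ≠ [] := by
    rintro rfl
    exact absurd hlen (Nat.not_lt_zero _)
  have hupper := two_mul_dtwSq_condense_add_length_le hx hlen
  have hzx := length_condense_add_mismatch_le_add_dtwSq hz hx
  have hyz := length_condense_add_mismatch_le_add_dtwSq hy hz
  have hhead := mismatch_triangle x.head? z.head? y.head?
  have hlast := mismatch_triangle x.getLast? z.getLast? y.getLast?
  rw [dtwSq_comm z x, mismatch_comm z.head?, mismatch_comm z.getLast?] at hzx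
  rw [mismatch_comm y.head?, mismatch_comm y.getLast?] at hyz
  omega

end DtwSq

/-- if `|s̃₁| < |s̃₂|`, then the condensation `s̃₂` is a mean of
`s₁` and `s₂`, with `dtw(s₂, s̃₂) = 0` and hence `F(s̃₂) = dtw(s₁, s̃₂)²`. -/
theorem condensation_is_mean_of_two (s1 s2 : List Bool)
    (h1 : s1 ≠ []) (h2 : s2 ≠ [])
    (hlt : (condense s1).length < (condense s2).length) :
    IsMean [s1, s2] (condense s2) ∧
    (∀ z : List Bool, z ≠ [] →
      dtwSq s1 (condense s2) + dtwSq s2 (condense s2) ≤ dtwSq s1 z + dtwSq s2 z) ∧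
    dtw s2 (condense s2) = 0 ∧
    Fobj [s1, s2] (condense s2) = dtwSq s1 (condense s2) := by
  have hself : dtwSq s2 (condense s2) = 0 := dtwSq_condense_self h2
  have hmin (z : List Bool) (hz : z ≠ []) :
      dtwSq s1 (condense s2) + dtwSq s2 (condense s2) ≤ dtwSq s1 z + dtwSq s2 z := by
    rw [hself, add_zero]
    exact dtwSq_condense_le_add h1 hz hlt
  refine ⟨⟨condense_ne_nil h2, fun z hz => ?_⟩, hmin, ?_, ?_⟩
  · simpa [Fobj] using hmin z hz
  · simp [dtw, hself]
  · simp [Fobj, hself]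
end

section
/- Let s_1, s_2, s_3 be binary strings with s_1[1] = s_2[1] = s_3[1], s_1[−1] = s_2[−1] = s_3[−1], and condensation lengths ℓ_1 := |s̃_1| ≤ ℓ_2 := |s̃_2| ≤ ℓ_3 := |s̃_3|. Then every condensed mean of s_1, s_2, s_3 has length at least ℓ_2. -/
/-!
A warping path repeats letters of both strings, so `dtw(s, z)²` is the least Hamming distance
between equally long stretchings `x` of `s` and `y` of `z`. Suppose that `s` has more blocks than
the condensed string `z`. Replacing longer and longer prefixes of `y` by those of `x` changes the
number of blocks by at most two at a time, while its parity is fixed by the two end letters. Hence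
some mixture of `x` and `y` has exactly two blocks more than `y` if the end letters of `s` and `z`
agree; if they disagree at some end, repairing one such end of `y` first (and the other end of `x`
if that disagrees as well) gives exactly one block more.
Every mixture other than `y` is strictly closer to `x` than `y` is, so lengthening `z` by one or
two letters, in a way that depends only on the end letters of the strings, strictly decreases
`dtw(s, z)²`. The same lengthening costs any other string with these end letters at most one. If
more than half of the strings had more blocks than `z`, the lengthened `z` would thus have a
smaller objective.
-/

section Sequences

variable {α : Type*} [DecidableEq α]

/-- The number of indices `i < T` at which the sequence `y` changes its value; the finite word
`y 0, …, y T` then has `changes y T + 1` blocks. -/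
def changes (y : ℕ → α) (T : ℕ) : ℕ := Nat.count (fun i => y i ≠ y (i + 1)) T

/-- The Hamming distance of the words `x 0, …, x T` and `y 0, …, y T`. -/
def mismatches (x y : ℕ → α) (T : ℕ) : ℕ := Nat.count (fun i => x i ≠ y i) (T + 1)

theorem changes_zero (y : ℕ → α) : changes y 0 = 0 :=
  Nat.count_zero _

theorem changes_succ (y : ℕ → α) (T : ℕ) :
    changes y (T + 1) = changes y T + if y T = y (T + 1) then 0 else 1 := by
  simp only [changes, Nat.count_succ, ne_eq, ite_not]

theorem changes_succ' (y : ℕ → α) (T : ℕ) :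
    changes y (T + 1) = changes (fun i => y (i + 1)) T + if y 0 = y 1 then 0 else 1 := by
  simp only [changes, Nat.count_succ', ne_eq, ite_not, zero_add]

theorem changes_mono (y : ℕ → α) : Monotone (changes y) :=
  Nat.count_monotone _

theorem changes_congr {x y : ℕ → α} {T : ℕ} (h : ∀ t ≤ T, x t = y t) :
    changes x T = changes y T := by
  induction T with
  | zero => simp only [changes_zero]
  | succ T ih =>
    rw [changes_succ, changes_succ, ih fun t ht => h t (by lia), h T (by lia), h (T + 1) le_rfl]

theorem mismatches_succ (x y : ℕ → α) (T : ℕ) :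
    mismatches x y (T + 1) = mismatches x y T + if x (T + 1) = y (T + 1) then 0 else 1 := by
  simp only [mismatches, Nat.count_succ _ (T + 1), ne_eq, ite_not]

theorem mismatches_congr {x x' y y' : ℕ → α} {T : ℕ} (hx : ∀ t ≤ T, x t = x' t)
    (hy : ∀ t ≤ T, y t = y' t) : mismatches x y T = mismatches x' y' T := by
  simp only [mismatches, Nat.count_eq_card_filter_range]
  congr 1
  refine Finset.filter_congr fun t ht => ?_
  have htT : t ≤ T := Nat.lt_succ_iff.mp (Finset.mem_range.mp ht)
  rw [hx t htT, hy t htT]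

theorem changes_le_of_eq_off {x y : ℕ → α} {k : ℕ} (h : ∀ t, t ≠ k → x t = y t) (T : ℕ) :
    changes x T ≤
      changes y T + (if 0 < k ∧ k ≤ T then 1 else 0) + (if k < T then 1 else 0) := by
  induction T with
  | zero => simp only [changes_zero, zero_le]
  | succ T ih =>
    rw [changes_succ, changes_succ]
    have hT := h T
    have hT' := h (T + 1)
    grind

theorem mismatches_lt_of_mixture {x y w : ℕ → α} {T k : ℕ} (hw : ∀ t, w t = x t ∨ w t = y t)
    (hk : k ≤ T) (hne : w k ≠ y k) : mismatches x w T < mismatches x y T := by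
  have hxk : w k = x k := (hw k).resolve_right hne
  simp only [mismatches, Nat.count_eq_card_filter_range]
  refine Finset.card_lt_card (Finset.ssubset_iff_of_subset ?_ |>.mpr ⟨k, ?_, ?_⟩)
  · refine Finset.monotone_filter_right _ fun t _ hxw => ?_
    rcases hw t with hwx | hwy
    · exact absurd hwx.symm hxw
    · exact hwy ▸ hxw
  · exact Finset.mem_filter.mpr ⟨Finset.mem_range.mpr (by lia), hxk ▸ hne⟩
  · simp only [Finset.mem_filter, hxk, ne_eq, not_true_eq_false, and_false, not_false_eq_true]

end Sequences

section BinarySequences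

variable {x y : ℕ → Bool} {T m : ℕ}

theorem not_iterate_changes (y : ℕ → Bool) (T : ℕ) : not^[changes y T] (y 0) = y T := by
  induction T with
  | zero => rfl
  | succ T ih =>
    rw [changes_succ]
    split_ifs with h
    · rw [add_zero, ih, h]
    · rw [Function.iterate_succ_apply', ih, ← Bool.eq_not.mpr (Ne.symm h)]

theorem changes_mod_two (y : ℕ → Bool) (T : ℕ) :
    changes y T % 2 = (y 0 ^^ y T).toNat := by
  induction T with
  | zero => simp only [changes_zero, Bool.xor_self, Bool.toNat_false, Nat.zero_mod]
  | succ T ih =>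
    rw [changes_succ, Nat.add_mod, ih]
    cases y 0 <;> cases y T <;> cases y (T + 1) <;> rfl

theorem exists_eq_of_steps_le_two {f : ℕ → ℕ} (hstep : ∀ k, f (k + 1) ≤ f k + 2)
    (hmod : ∀ k, f k % 2 = m % 2) {K : ℕ} (h0 : f 0 ≤ m) (hK : m ≤ f K) : ∃ k, f k = m := by
  induction K with
  | zero => exact ⟨0, le_antisymm h0 hK⟩
  | succ K ih =>
    rcases le_or_gt m (f K) with hm | hm
    · exact ih hm
    · exact ⟨K + 1, by have := hstep K; have := hmod K; have := hmod (K + 1); lia⟩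

theorem exists_mixture_changes_eq (h0 : x 0 = y 0) (hT : x T = y T)
    (hm : m % 2 = changes y T % 2) (hy : changes y T ≤ m) (hx : m ≤ changes x T) :
    ∃ w : ℕ → Bool, (∀ t, w t = x t ∨ w t = y t) ∧ changes w T = m := by
  let splice (k t : ℕ) : Bool := if t < k then x t else y t
  have splice_mem (k t : ℕ) : splice k t = x t ∨ splice k t = y t := ite_eq_or_eq _ _ _
  have splice_mod (k : ℕ) : changes (splice k) T % 2 = m % 2 := by
    have hk0 : splice k 0 = y 0 := (splice_mem k 0).elim (·.trans h0) id
    have hkT : splice k T = y T := (splice_mem k T).elim (·.trans hT) id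
    rw [hm, changes_mod_two, changes_mod_two, hk0, hkT]
  have splice_succ (k : ℕ) : changes (splice (k + 1)) T ≤ changes (splice k) T + 2 := by
    have hoff (t : ℕ) (ht : t ≠ k) : splice (k + 1) t = splice k t := by grind
    exact (changes_le_of_eq_off hoff T).trans (by grind)
  have splice_zero : changes (splice 0) T = changes y T := changes_congr fun t _ => by grind
  have splice_last : changes (splice (T + 1)) T = changes x T :=
    changes_congr fun t ht => by grind
  obtain ⟨k, hk⟩ := exists_eq_of_steps_le_two (K := T + 1) splice_succ splice_mod
    (splice_zero.trans_le hy) (splice_last.symm ▸ hx)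
  exact ⟨splice k, splice_mem k, hk⟩

/-- `lo` and `hi` repair the end letters of `y` and `x` so that both agree there; every mixture of
the two is then a mixture of `x` and `y`. -/
theorem exists_closer_of_mixtures {lo hi : ℕ → Bool} (hlo : ∀ t, lo t = x t ∨ lo t = y t)
    (hhi : ∀ t, hi t = x t ∨ hi t = y t) (h0 : hi 0 = lo 0) (hT : hi T = lo T)
    (hm : m % 2 = changes lo T % 2) (hlom : changes lo T ≤ m) (hmhi : m ≤ changes hi T)
    (hne : m ≠ changes y T) :
    ∃ w, w 0 = lo 0 ∧ changes w T = m ∧ mismatches x w T < mismatches x y T := by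
  obtain ⟨w, hw, hwm⟩ := exists_mixture_changes_eq h0 hT hm hlom hmhi
  have hwxy (t : ℕ) : w t = x t ∨ w t = y t := by
    rcases hw t with h | h <;> rw [h]
    exacts [hhi t, hlo t]
  obtain ⟨k, hk, hwk⟩ : ∃ k ≤ T, w k ≠ y k := by
    by_contra! hwy
    exact hne (hwm ▸ changes_congr hwy)
  exact ⟨w, (hw 0).elim (·.trans h0) id, hwm, mismatches_lt_of_mixture hwxy hk hwk⟩

theorem exists_closer_changes_add_two (h0 : x 0 = y 0) (hT : x T = y T)
    (hlt : changes y T < changes x T) :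
    ∃ w, w 0 = x 0 ∧ changes w T = changes y T + 2 ∧ mismatches x w T < mismatches x y T := by
  have hmod : changes x T % 2 = changes y T % 2 := by
    rw [changes_mod_two, changes_mod_two, h0, hT]
  rw [h0]
  exact exists_closer_of_mixtures (fun _ => .inr rfl) (fun _ => .inl rfl) h0 hT
    (by lia) (by lia) (by lia) (by lia)

theorem exists_closer_changes_succ_of_head_ne (h0 : x 0 ≠ y 0)
    (hlt : changes y T < changes x T) :
    ∃ w, w 0 = x 0 ∧ changes w T = changes y T + 1 ∧ mismatches x w T < mismatches x y T := by
  have hT : T ≠ 0 := by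
    rintro rfl
    simp only [changes_zero, lt_irrefl] at hlt
  let lo := Function.update y 0 (x 0)
  let hi := Function.update x T (y T)
  have lo_zero : lo 0 = x 0 := Function.update_self ..
  have lo_last : lo T = y T := Function.update_of_ne hT ..
  have hi_zero : hi 0 = x 0 := Function.update_of_ne hT.symm ..
  have hi_last : hi T = y T := Function.update_self ..
  have lo_mod : changes lo T % 2 = (changes y T + 1) % 2 := by
    rw [Nat.add_mod, changes_mod_two, changes_mod_two, lo_zero, lo_last, Bool.eq_not.mpr h0]
    cases y 0 <;> cases y T <;> rfl
  have hi_mod : changes hi T % 2 = changes lo T % 2 := by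
    rw [changes_mod_two, changes_mod_two, hi_zero, lo_zero, hi_last, lo_last]
  have lo_le : changes lo T ≤ changes y T + 1 := by
    have := changes_le_of_eq_off (x := lo) (y := y) (k := 0)
      (fun t ht => Function.update_of_ne ht ..) T
    grind
  have le_hi : changes x T ≤ changes hi T + 1 := by
    have := changes_le_of_eq_off (x := x) (y := hi) (k := T)
      (fun t ht => (Function.update_of_ne ht ..).symm) T
    grind
  rw [← lo_zero]
  exact exists_closer_of_mixtures (fun t => by grind) (fun t => by grind)
    (hi_zero.trans lo_zero.symm) (hi_last.trans lo_last.symm) lo_mod.symm lo_le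
    (by lia) (by lia)

theorem exists_closer_changes_succ_of_last_ne (h0 : x 0 = y 0) (hT : x T ≠ y T)
    (hlt : changes y T < changes x T) :
    ∃ w, w 0 = x 0 ∧ changes w T = changes y T + 1 ∧ mismatches x w T < mismatches x y T := by
  have hT0 : 0 ≠ T := by
    rintro rfl
    exact hT h0
  let lo := Function.update y T (x T)
  have lo_zero : lo 0 = x 0 := (Function.update_of_ne hT0 ..).trans h0.symm
  have lo_last : lo T = x T := Function.update_self ..
  have lo_mod : changes lo T % 2 = (changes y T + 1) % 2 := by
    rw [Nat.add_mod, changes_mod_two, changes_mod_two, lo_zero, h0, lo_last, Bool.eq_not.mpr hT]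
    cases y 0 <;> cases y T <;> rfl
  have lo_le : changes lo T ≤ changes y T + 1 := by
    have := changes_le_of_eq_off (x := lo) (y := y) (k := T)
      (fun t ht => Function.update_of_ne ht ..) T
    grind
  rw [← lo_zero]
  exact exists_closer_of_mixtures (fun t => by grind) (fun _ => .inl rfl)
    lo_zero.symm lo_last.symm lo_mod.symm lo_le hlt (by lia)

end BinarySequences

section Walks

/-- A lazy walk on `ℕ`: it starts at `0` and at each of its first `T` steps stays or advances by
one. The word `t ↦ x (u t)` is then the word `x` with some letters repeated. -/
def IsWalk (u : ℕ → ℕ) (T : ℕ) : Prop :=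
  u 0 = 0 ∧ ∀ t < T, u (t + 1) = u t ∨ u (t + 1) = u t + 1

variable {u : ℕ → ℕ} {T : ℕ}

theorem IsWalk.of_succ (hu : IsWalk u (T + 1)) : IsWalk u T :=
  ⟨hu.1, fun t ht => hu.2 t (by lia)⟩

theorem isWalk_min (k T : ℕ) : IsWalk (fun t => min t k) T :=
  ⟨Nat.zero_min k, fun t _ => by lia⟩

theorem isWalk_changes {α : Type*} [DecidableEq α] (y : ℕ → α) (T : ℕ) : IsWalk (changes y) T :=
  ⟨changes_zero y, fun t _ => by rw [changes_succ]; grind⟩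

theorem changes_comp_walk {α : Type*} [DecidableEq α] (x : ℕ → α) (hu : IsWalk u T) :
    changes (fun t => x (u t)) T = changes x (u T) := by
  induction T with
  | zero => rw [changes_zero, hu.1, changes_zero]
  | succ T ih =>
    rw [changes_succ, ih hu.of_succ]
    rcases hu.2 T (Nat.lt_succ_self T) with hstay | hmove
    · rw [hstay, if_pos rfl, add_zero]
    · rw [hmove, changes_succ]

end Walks

section Letters

/-- The `i`-th letter of `s`, counted from `0`, with the junk value `false` past the end that
`pathCost` uses. -/
abbrev letter (s : List Bool) (i : ℕ) : Bool := s.getD i false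

theorem letter_zero_of_head? {s : List Bool} {b : Bool} (h : s.head? = some b) :
    letter s 0 = b := by
  rw [letter, List.getD_eq_getElem?_getD, ← List.head?_eq_getElem?, h, Option.getD_some]

theorem letter_length_sub_one_of_getLast? {s : List Bool} {c : Bool}
    (h : s.getLast? = some c) : letter s (s.length - 1) = c := by
  rw [letter, List.getD_eq_getElem?_getD, ← List.getLast?_eq_getElem?, h, Option.getD_some]

theorem changes_letter_cons_cons (a b : Bool) (t : List Bool) :
    changes (letter (a :: b :: t)) (t.length + 1) =
      changes (letter (b :: t)) t.length + if a = b then 0 else 1 :=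
  changes_succ' _ _

theorem length_condense {s : List Bool} (hs : s ≠ []) :
    (condense s).length = changes (letter s) (s.length - 1) + 1 := by
  induction s using condense.induct with
  | case1 => exact absurd rfl hs
  | case2 a => rfl
  | case3 a t ih =>
    rw [condense, if_pos rfl, ih (List.cons_ne_nil _ _)]
    simp only [List.length_cons, Nat.add_sub_cancel, changes_letter_cons_cons, ↓reduceIte,
      add_zero]
  | case4 a b t hab ih =>
    rw [condense, if_neg hab, List.length_cons, ih (List.cons_ne_nil _ _)]
    simp only [List.length_cons, Nat.add_sub_cancel, changes_letter_cons_cons, if_neg hab]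

theorem letter_iterate_not {a : Bool} {n i : ℕ} (hi : i < n) :
    letter (List.iterate not a n) i = not^[i] a := by
  rw [letter, List.getD_eq_getElem _ _ (by rwa [List.length_iterate]), List.getElem_iterate]

theorem changes_letter_iterate_not (a : Bool) (n : ℕ) :
    changes (letter (List.iterate not a (n + 1))) n = n := by
  refine Nat.count_of_forall fun i hi => ?_
  rw [letter_iterate_not (by lia), letter_iterate_not (by lia), Function.iterate_succ_apply']
  exact (Bool.not_ne_self _).symm

theorem eq_iterate_not_of_isChain_ne {a : Bool} {t : List Bool}
    (h : List.IsChain (· ≠ ·) (a :: t)) : a :: t = List.iterate not a (t.length + 1) := by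
  induction t generalizing a with
  | nil => rfl
  | cons b t ih =>
    obtain ⟨hab, ht⟩ := List.isChain_cons_cons.mp h
    rw [List.length_cons, ih ht, Bool.eq_not.mpr hab.symm]
    rfl

theorem iterate_not_succ' (a : Bool) (n : ℕ) :
    List.iterate not a (n + 1) = List.iterate not a n ++ [not^[n] a] :=
  List.iterate_add not a n 1

end Letters

section WarpingPaths

variable {x z : List Bool}

/-- Steps at which both walks stay put are dropped from the path. -/
theorem exists_isWarpingPath_of_walks {u v : ℕ → ℕ} {T : ℕ} (hu : IsWalk u T) (hv : IsWalk v T)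
    (x z : List Bool) :
    ∃ p, IsWarpingPath (u T + 1) (v T + 1) p ∧
      pathCost x z p ≤ mismatches (fun t => letter x (u t)) (fun t => letter z (v t)) T := by
  induction T with
  | zero =>
    refine ⟨[(0, 0)], ⟨rfl, by simp [hu.1, hv.1], List.isChain_singleton _, by simp⟩, ?_⟩
    simp [pathCost, mismatches, Nat.count_succ, hu.1, hv.1]
  | succ T ih =>
    obtain ⟨p, ⟨hhead, hlast, hchain, hbound⟩, hcost⟩ := ih hu.of_succ hv.of_succ
    have huT := hu.2 T (Nat.lt_succ_self T)
    have hvT := hv.2 T (Nat.lt_succ_self T)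
    rw [mismatches_succ]
    by_cases hstay : u (T + 1) = u T ∧ v (T + 1) = v T
    · rw [hstay.1, hstay.2]
      exact ⟨p, ⟨hhead, hlast, hchain, hbound⟩, hcost.trans (Nat.le_add_right _ _)⟩
    have hstep : wpStep (u T, v T) (u (T + 1), v (T + 1)) := by
      simp only [wpStep]
      lia
    refine ⟨p ++ [(u (T + 1), v (T + 1))], ⟨?_, ?_, ?_, ?_⟩, ?_⟩
    · rw [List.head?_append, hhead, Option.some_or]
    · simp
    · refine List.isChain_append.mpr ⟨hchain, List.isChain_singleton _, fun q hq r hr => ?_⟩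
      obtain rfl : (u T, v T) = q := by simpa [hlast] using hq
      obtain rfl : (u (T + 1), v (T + 1)) = r := by simpa using hr
      exact hstep
    · intro q hq
      rcases List.mem_append.mp hq with hq | hq
      · have := hbound q hq
        lia
      · rw [List.mem_singleton.mp hq]
        exact ⟨Nat.lt_succ_self _, Nat.lt_succ_self _⟩
    · simpa [pathCost] using hcost

theorem dtwSq_le_pathCost {p : List (ℕ × ℕ)} (hp : IsWarpingPath x.length z.length p) :
    dtwSq x z ≤ pathCost x z p :=
  Nat.sInf_le ⟨p, hp, rfl⟩

theorem dtwSq_le_mismatches {u v : ℕ → ℕ} {T : ℕ} (hu : IsWalk u T) (hv : IsWalk v T)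
    (hx : u T + 1 = x.length) (hz : v T + 1 = z.length) :
    dtwSq x z ≤ mismatches (fun t => letter x (u t)) (fun t => letter z (v t)) T := by
  obtain ⟨p, hp, hcost⟩ := exists_isWarpingPath_of_walks hu hv x z
  rw [hx, hz] at hp
  exact (dtwSq_le_pathCost hp).trans hcost

theorem exists_isWarpingPath_pathCost_eq_dtwSq (hx : x ≠ []) (hz : z ≠ []) :
    ∃ p, IsWarpingPath x.length z.length p ∧ pathCost x z p = dtwSq x z := by
  have hx_pos := List.length_pos_iff.mpr hx
  have hz_pos := List.length_pos_iff.mpr hz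
  obtain ⟨p, hp, -⟩ := exists_isWarpingPath_of_walks
    (isWalk_min (x.length - 1) (x.length + z.length))
    (isWalk_min (z.length - 1) (x.length + z.length)) x z
  rw [show min (x.length + z.length) (x.length - 1) + 1 = x.length by lia,
    show min (x.length + z.length) (z.length - 1) + 1 = z.length by lia] at hp
  exact Nat.sInf_mem (s := {c | ∃ p, IsWarpingPath x.length z.length p ∧ pathCost x z p = c})
    ⟨_, p, hp, rfl⟩

theorem pathCost_eq_count (x z : List Bool) (p : List (ℕ × ℕ)) :
    pathCost x z p =
      Nat.count (fun t => letter x (p.getD t (0, 0)).1 ≠ letter z (p.getD t (0, 0)).2)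
        p.length := by
  induction p with
  | nil => rfl
  | cons q p ih =>
    rw [List.length_cons, Nat.count_succ']
    simp only [List.getD_cons_succ, List.getD_cons_zero, ← ih]
    simp [pathCost, add_comm]

theorem exists_walks_of_isWarpingPath {m n : ℕ} {p : List (ℕ × ℕ)} (hp : IsWarpingPath m n p)
    (x z : List Bool) :
    ∃ T u v, IsWalk u T ∧ IsWalk v T ∧ u T = m - 1 ∧ v T = n - 1 ∧
      mismatches (fun t => letter x (u t)) (fun t => letter z (v t)) T = pathCost x z p := by
  obtain ⟨hhead, hlast, hchain, -⟩ := hp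
  have hpos : 0 < p.length := List.length_pos_iff.mpr (by rintro rfl; simp at hhead)
  let q (t : ℕ) : ℕ × ℕ := p.getD t (0, 0)
  have q_zero : q 0 = (0, 0) := by
    simp only [q, List.getD_eq_getElem?_getD, ← List.head?_eq_getElem?, hhead, Option.getD_some]
  have q_last : q (p.length - 1) = (m - 1, n - 1) := by
    simp only [q, List.getD_eq_getElem?_getD, ← List.getLast?_eq_getElem?, hlast,
      Option.getD_some]
  have q_step (t : ℕ) (ht : t < p.length - 1) : wpStep (q t) (q (t + 1)) := by
    simp only [q]
    rw [List.getD_eq_getElem _ _ (by lia), List.getD_eq_getElem _ _ (by lia)]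
    exact List.isChain_iff_getElem.mp hchain t (by lia)
  refine ⟨p.length - 1, fun t => (q t).1, fun t => (q t).2, ⟨?_, fun t ht => ?_⟩,
    ⟨?_, fun t ht => ?_⟩, ?_, ?_, ?_⟩
  · exact congrArg Prod.fst q_zero
  · rcases q_step t ht with h | h | h
    exacts [.inr h.1, .inl h.1, .inr h.1]
  · exact congrArg Prod.snd q_zero
  · rcases q_step t ht with h | h | h
    exacts [.inl h.2, .inr h.2, .inr h.2]
  · exact congrArg Prod.fst q_last
  · exact congrArg Prod.snd q_last
  · rw [pathCost_eq_count, mismatches, Nat.sub_add_cancel hpos]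

theorem dtwSq_cons_le (hx : x ≠ []) (hz : z ≠ []) (b : Bool) :
    dtwSq x (b :: z) ≤ dtwSq x z + if letter x 0 = b then 0 else 1 := by
  obtain ⟨p, ⟨hhead, hlast, hchain, hbound⟩, hcost⟩ :=
    exists_isWarpingPath_pathCost_eq_dtwSq hx hz
  let shift (q : ℕ × ℕ) : ℕ × ℕ := (q.1, q.2 + 1)
  have hz_pos := List.length_pos_iff.mpr hz
  have hpath : IsWarpingPath x.length (b :: z).length ((0, 0) :: p.map shift) := by
    refine ⟨rfl, ?_, List.isChain_cons.mpr ⟨?_, ?_⟩, ?_⟩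
    · simp only [List.getLast?_cons, List.getLast?_map, hlast, Option.map_some,
        Option.getD_some, List.length_cons, shift, Nat.sub_add_cancel hz_pos, Nat.add_sub_cancel]
    · simp [hhead, shift, wpStep]
    · refine (List.isChain_map shift).mpr (hchain.imp fun q r hqr => ?_)
      simp only [wpStep, shift] at hqr ⊢
      lia
    · have := List.length_pos_iff.mpr hx
      simp only [List.mem_cons, List.mem_map, List.length_cons]
      rintro _ (rfl | ⟨q, hq, rfl⟩)
      · simp only; lia
      · have := hbound q hq
        simp only [shift]; lia
  refine (dtwSq_le_pathCost hpath).trans_eq ?_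
  rw [← hcost]
  simp [pathCost, shift, Function.comp_def, add_comm]

theorem dtwSq_append_singleton_le (hx : x ≠ []) (hz : z ≠ []) (b : Bool) :
    dtwSq x (z ++ [b]) ≤ dtwSq x z + if letter x (x.length - 1) = b then 0 else 1 := by
  obtain ⟨p, ⟨hhead, hlast, hchain, hbound⟩, hcost⟩ :=
    exists_isWarpingPath_pathCost_eq_dtwSq hx hz
  have hx_pos := List.length_pos_iff.mpr hx
  have hz_pos := List.length_pos_iff.mpr hz
  have hpath : IsWarpingPath x.length (z ++ [b]).length (p ++ [(x.length - 1, z.length)]) := by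
    refine ⟨?_, ?_, List.isChain_append.mpr ⟨hchain, List.isChain_singleton _, ?_⟩, ?_⟩
    · rw [List.head?_append, hhead, Option.some_or]
    · simp
    · intro q hq r hr
      obtain rfl : (x.length - 1, z.length - 1) = q := by simpa [hlast] using hq
      obtain rfl : (x.length - 1, z.length) = r := by simpa using hr
      simp only [wpStep]
      lia
    · simp only [List.mem_append, List.mem_singleton, List.length_append, List.length_singleton]
      rintro q (hq | rfl)
      · have := hbound q hq
        lia
      · simp only; lia
  have hcost' : pathCost x (z ++ [b]) p = pathCost x z p := by
    refine congrArg List.sum (List.map_congr_left fun q hq => ?_)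
    rw [List.getD_append _ _ _ _ (hbound q hq).2]
  refine (dtwSq_le_pathCost hpath).trans_eq ?_
  rw [← hcost, ← hcost']
  simp [pathCost]

end WarpingPaths

section Lengthening

variable {s z : List Bool} {a b c : Bool} {n : ℕ}

theorem dtwSq_iterate_not_le_mismatches {u : ℕ → ℕ} {T : ℕ} (hu : IsWalk u T)
    (huT : u T + 1 = s.length) (y : ℕ → Bool) :
    dtwSq s (List.iterate not (y 0) (changes y T + 1)) ≤
      mismatches (fun t => letter s (u t)) y T := by
  refine (dtwSq_le_mismatches hu (isWalk_changes y T) huT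
    (List.length_iterate _ _ _).symm).trans_eq (mismatches_congr (fun _ _ => rfl) fun t ht => ?_)
  rw [letter_iterate_not (Nat.lt_succ_of_le (changes_mono y ht)), not_iterate_changes]

/-- The word `x 0, …, x T` is `s` with some letters repeated, and `y 0, …, y T` is the alternating
word with some letters repeated, both as prescribed by an optimal warping path. -/
theorem exists_optimal_stretching (hb : s.head? = some b) (hc : s.getLast? = some c) (a : Bool)
    (n : ℕ) :
    ∃ (T : ℕ) (x y : ℕ → Bool), x 0 = b ∧ x T = c ∧ changes x T + 1 = (condense s).length ∧
      y 0 = a ∧ changes y T = n ∧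
      mismatches x y T = dtwSq s (List.iterate not a (n + 1)) ∧
      ∀ w : ℕ → Bool, dtwSq s (List.iterate not (w 0) (changes w T + 1)) ≤ mismatches x w T := by
  have hs : s ≠ [] := by
    rintro rfl
    simp at hb
  obtain ⟨p, hp, hcost⟩ :=
    exists_isWarpingPath_pathCost_eq_dtwSq (z := List.iterate not a (n + 1)) hs
      (List.cons_ne_nil _ _)
  obtain ⟨T, u, v, hu, hv, huT, hvT, huv⟩ := exists_walks_of_isWarpingPath hp _ _
  rw [List.length_iterate, Nat.add_sub_cancel] at hvT
  refine ⟨T, fun t => letter s (u t), fun t => letter (List.iterate not a (n + 1)) (v t),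
    ?_, ?_, ?_, ?_, ?_, huv.trans hcost, dtwSq_iterate_not_le_mismatches hu ?_⟩
  · exact (congrArg (letter s) hu.1).trans (letter_zero_of_head? hb)
  · exact (congrArg (letter s) huT).trans (letter_length_sub_one_of_getLast? hc)
  · rw [changes_comp_walk _ hu, huT, length_condense hs]
  · exact (congrArg (letter _) hv.1).trans (letter_iterate_not n.succ_pos)
  · rw [changes_comp_walk _ hv, hvT, changes_letter_iterate_not]
  · rw [huT, Nat.sub_add_cancel (List.length_pos_iff.mpr hs)]

theorem dtwSq_iterate_not_succ_lt_of_head_ne (hb : s.head? = some b) (hba : b ≠ a)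
    (hlen : n + 1 < (condense s).length) :
    dtwSq s (List.iterate not b (n + 2)) < dtwSq s (List.iterate not a (n + 1)) := by
  obtain ⟨c, hc⟩ : ∃ c, s.getLast? = some c :=
    ⟨_, List.getLast?_eq_some_getLast (by rintro rfl; simp at hb)⟩
  obtain ⟨T, x, y, rfl, -, hx, rfl, rfl, hopt, hle⟩ := exists_optimal_stretching hb hc a n
  obtain ⟨w, hw0, hwT, hlt⟩ := exists_closer_changes_succ_of_head_ne (T := T) hba (by lia)
  have h := hle w
  rw [hw0, hwT] at h
  exact (h.trans_lt hlt).trans_eq hopt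

theorem dtwSq_iterate_not_succ_lt_of_last_ne (ha : s.head? = some a) (hc : s.getLast? = some c)
    (hca : c ≠ not^[n] a) (hlen : n + 1 < (condense s).length) :
    dtwSq s (List.iterate not a (n + 2)) < dtwSq s (List.iterate not a (n + 1)) := by
  obtain ⟨T, x, y, rfl, rfl, hx, hy0, rfl, hopt, hle⟩ := exists_optimal_stretching ha hc a n
  rw [← hy0, not_iterate_changes] at hca
  obtain ⟨w, hw0, hwT, hlt⟩ := exists_closer_changes_succ_of_last_ne hy0.symm hca (by lia)
  have h := hle w
  rw [hw0, hwT] at h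
  exact (h.trans_lt hlt).trans_eq hopt

theorem dtwSq_iterate_not_add_two_lt (ha : s.head? = some a)
    (hc : s.getLast? = some (not^[n] a)) (hlen : n + 1 < (condense s).length) :
    dtwSq s (List.iterate not a (n + 3)) < dtwSq s (List.iterate not a (n + 1)) := by
  obtain ⟨T, x, y, rfl, hxT, hx, hy0, rfl, hopt, hle⟩ := exists_optimal_stretching ha hc a n
  rw [← hy0, not_iterate_changes] at hxT
  obtain ⟨w, hw0, hwT, hlt⟩ := exists_closer_changes_add_two hy0.symm hxT (by lia)
  have h := hle w
  rw [hw0, hwT] at h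
  exact (h.trans_lt hlt).trans_eq hopt

theorem dtwSq_cons_le_of_head? (hb : s.head? = some b) (hz : z ≠ []) :
    dtwSq s (b :: z) ≤ dtwSq s z := by
  have hs : s ≠ [] := by
    rintro rfl
    simp at hb
  have h := dtwSq_cons_le hs hz b
  rwa [if_pos (letter_zero_of_head? hb), add_zero] at h

theorem dtwSq_iterate_not_succ_le_of_last_ne (hc : s.getLast? = some c) (hca : c ≠ not^[n] a) :
    dtwSq s (List.iterate not a (n + 2)) ≤ dtwSq s (List.iterate not a (n + 1)) := by
  have hs : s ≠ [] := by
    rintro rfl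
    simp at hc
  have hc' : letter s (s.length - 1) = not^[n + 1] a := by
    rw [letter_length_sub_one_of_getLast? hc, Function.iterate_succ_apply', Bool.eq_not.mpr hca]
  have h := dtwSq_append_singleton_le (z := List.iterate not a (n + 1)) hs
    (List.cons_ne_nil _ _) (not^[n + 1] a)
  rwa [← iterate_not_succ', if_pos hc'] at h

theorem dtwSq_iterate_not_succ_le_add_one (hs : s ≠ []) (a : Bool) (n : ℕ) :
    dtwSq s (List.iterate not a (n + 2)) ≤ dtwSq s (List.iterate not a (n + 1)) + 1 := by
  have h := dtwSq_append_singleton_le (z := List.iterate not a (n + 1)) hs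
    (List.cons_ne_nil _ _) (not^[n + 1] a)
  rw [← iterate_not_succ'] at h
  grind

theorem dtwSq_iterate_not_add_two_le_add_one (hc : s.getLast? = some (not^[n] a)) :
    dtwSq s (List.iterate not a (n + 3)) ≤ dtwSq s (List.iterate not a (n + 1)) + 1 := by
  have hs : s ≠ [] := by
    rintro rfl
    simp at hc
  have hne : not^[n] a ≠ not^[n + 1] a := by
    rw [Function.iterate_succ_apply']
    exact (Bool.not_ne_self _).symm
  exact (dtwSq_iterate_not_succ_le_of_last_ne hc hne).trans
    (dtwSq_iterate_not_succ_le_add_one hs a n)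

theorem exists_lengthening (hz : z ≠ []) (hzc : z.IsChain (· ≠ ·)) (b c : Bool) :
    ∃ w ≠ [], ∀ s : List Bool, s.head? = some b → s.getLast? = some c →
      dtwSq s w ≤ dtwSq s z + 1 ∧
        (z.length < (condense s).length → dtwSq s w < dtwSq s z) := by
  obtain ⟨a, t, rfl⟩ := List.exists_cons_of_ne_nil hz
  rw [eq_iterate_not_of_isChain_ne hzc, List.length_iterate]
  generalize t.length = n
  by_cases hba : b = a
  · subst hba
    by_cases hcb : c = not^[n] b
    · subst hcb
      exact ⟨List.iterate not b (n + 3), List.cons_ne_nil _ _, fun s hb hc =>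
        ⟨dtwSq_iterate_not_add_two_le_add_one hc, dtwSq_iterate_not_add_two_lt hb hc⟩⟩
    · exact ⟨List.iterate not b (n + 2), List.cons_ne_nil _ _, fun s hb hc =>
        ⟨(dtwSq_iterate_not_succ_le_of_last_ne hc hcb).trans (Nat.le_succ _),
          dtwSq_iterate_not_succ_lt_of_last_ne hb hc hcb⟩⟩
  · have hcons : List.iterate not b (n + 2) = b :: List.iterate not a (n + 1) := by
      rw [Bool.eq_not.mpr (Ne.symm hba)]
      rfl
    refine ⟨List.iterate not b (n + 2), List.cons_ne_nil _ _, fun s hb _ =>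
      ⟨?_, dtwSq_iterate_not_succ_lt_of_head_ne hb hba⟩⟩
    rw [hcons]
    exact (dtwSq_cons_le_of_head? hb (List.cons_ne_nil _ _)).trans (Nat.le_succ _)

theorem Fobj_add_two_mul_countP_le {ss : List (List Bool)} {w z : List Bool}
    (hw : ∀ s ∈ ss, dtwSq s w ≤ dtwSq s z + 1 ∧
      (z.length < (condense s).length → dtwSq s w < dtwSq s z)) :
    Fobj ss w + 2 * ss.countP (fun s => z.length < (condense s).length) ≤
      Fobj ss z + ss.length := by
  induction ss with
  | nil => rfl
  | cons s ss ih =>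
    obtain ⟨hle, hlt⟩ := hw s List.mem_cons_self
    have ih := ih fun t ht => hw t (List.mem_cons_of_mem s ht)
    simp only [Fobj, List.map_cons, List.sum_cons, List.countP_cons, List.length_cons,
      decide_eq_true_eq] at ih ⊢
    split_ifs with hlong
    · have := hlt hlong
      lia
    · lia

end Lengthening

theorem condensed_mean_of_three_length_lower_bound_general {ss : List (List Bool)} {b c : Bool}
    (hhead : ∀ s ∈ ss, s.head? = some b) (hlast : ∀ s ∈ ss, s.getLast? = some c)
    {z : List Bool} (hzc : z.IsChain (· ≠ ·)) (hz : IsMean ss z) :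
    2 * ss.countP (fun s => z.length < (condense s).length) ≤ ss.length := by
  obtain ⟨w, hw, hdtw⟩ := exists_lengthening hz.1 hzc b c
  have hF := Fobj_add_two_mul_countP_le fun s hs => hdtw s (hhead s hs) (hlast s hs)
  have hmin := hz.2 w hw
  lia

/-- for three binary strings sharing first and last symbols and
with condensation lengths `ℓ₁ ≤ ℓ₂ ≤ ℓ₃`, every condensed mean has length at
least `ℓ₂`. -/
theorem condensed_mean_of_three_length_lower_bound (s1 s2 s3 : List Bool)
    (h1 : s1 ≠ []) (h2 : s2 ≠ []) (h3 : s3 ≠ [])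
    (hf12 : s1.head? = s2.head?) (hf23 : s2.head? = s3.head?)
    (hl12 : s1.getLast? = s2.getLast?) (hl23 : s2.getLast? = s3.getLast?)
    (h12 : (condense s1).length ≤ (condense s2).length)
    (h23 : (condense s2).length ≤ (condense s3).length)
    (z : List Bool) (hzc : List.Chain' (· ≠ ·) z) (hz : IsMean [s1, s2, s3] z) :
    (condense s2).length ≤ z.length := by
  obtain ⟨b, hb⟩ : ∃ b, s1.head? = some b := ⟨_, List.head?_eq_some_head h1⟩
  obtain ⟨c, hc⟩ : ∃ c, s1.getLast? = some c := ⟨_, List.getLast?_eq_some_getLast h1⟩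
  have hmedian := condensed_mean_of_three_length_lower_bound_general (b := b) (c := c)
    (by simp [← hf23, ← hf12, hb]) (by simp [← hl23, ← hl12, hc]) hzc hz
  by_contra! hlt
  have hlt' := hlt.trans_le h23
  simp only [List.countP_cons, List.countP_nil, List.length_cons, List.length_nil, hlt, hlt',
    decide_true, ↓reduceIte] at hmedian
  lia
end
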